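/- Let R ⊆ S₁ × S₂ and Q ⊆ S₂ × S₃ be ambiguous representations, and fix separating compatibilities P₁ : S₁ × Ŝ₁ → {0,1}, P₂ : S₂ × Ŝ₂ → {0,1}, P₃ : S₃ × Ŝ₃ → {0,1}. Then Q⊤;R⊤ ⊆ (R;Q)⊤. -/

import Mathlib

/-- A dcpo: every nonempty directed subset has a least upper bound. -/
def IsDcpo (α : Type*) [PartialOrder α] : Prop :=
  ∀ D : Set α, D.Nonempty → DirectedOn (· ≤ ·) D → ∃ a : α, IsLUB D a

/-- Scott closed: a lower set closed under suprema of its (nonempty) directed subsets. -/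
def ScottClosed {α : Type*} [PartialOrder α] (A : Set α) : Prop :=
  IsLowerSet A ∧
    ∀ D : Set α, D ⊆ A → D.Nonempty → DirectedOn (· ≤ ·) D → ∀ a : α, IsLUB D a → a ∈ A

/-- Scott closure: the least Scott closed set containing `A`. -/
def scottClosure {α : Type*} [PartialOrder α] (A : Set α) : Set α :=
  ⋂₀ {C : Set α | ScottClosed C ∧ A ⊆ C}

/-- `x` is way below `y`. -/
def WayBelow {α : Type*} [PartialOrder α] (x y : α) : Prop :=
  ∀ D : Set α, D.Nonempty → DirectedOn (· ≤ ·) D → ∀ a : α, IsLUB D a → y ≤ a → ∃ d ∈ D, x ≤ d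

/-- A continuous (meet-)semilattice with zero: a dcpo meet-semilattice with bottom in which
every element is the directed supremum of the elements way below it. -/
def IsContinuousSemilattice (α : Type*) [SemilatticeInf α] [OrderBot α] : Prop :=
  IsDcpo α ∧
    ∀ y : α, DirectedOn (· ≤ ·) {x : α | WayBelow x y} ∧ IsLUB {x : α | WayBelow x y} y

/-- A compatibility `P : S × S' → {0,1}` (encoded with `Prop` as the two-element lattice,
`P x y` meaning `P(x,y) = 1`): it preserves binary meets in each variable separately,
sends pairs containing a bottom element to `0`, and is Scott continuous (preserves
suprema of nonempty directed subsets of the product). -/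
def IsCompatibility {S S' : Type*} [SemilatticeInf S] [OrderBot S]
    [SemilatticeInf S'] [OrderBot S'] (P : S → S' → Prop) : Prop :=
  (∀ x₁ x₂ y, P (x₁ ⊓ x₂) y ↔ P x₁ y ∧ P x₂ y) ∧
  (∀ x y₁ y₂, P x (y₁ ⊓ y₂) ↔ P x y₁ ∧ P x y₂) ∧
  (∀ y, ¬ P ⊥ y) ∧ (∀ x, ¬ P x ⊥) ∧
  (∀ D : Set (S × S'), D.Nonempty → DirectedOn (· ≤ ·) D → ∀ a : S × S', IsLUB D a →
    (P a.1 a.2 ↔ ∃ p ∈ D, P p.1 p.2))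

/-- A separating compatibility. -/
def IsSeparatingCompatibility {S S' : Type*} [SemilatticeInf S] [OrderBot S]
    [SemilatticeInf S'] [OrderBot S'] (P : S → S' → Prop) : Prop :=
  IsCompatibility P ∧
  (∀ x₁ x₂ : S, (∀ y, P x₁ y ↔ P x₂ y) → x₁ = x₂) ∧
  (∀ y₁ y₂ : S', (∀ x, P x y₁ ↔ P x y₂) → y₁ = y₂)

/-- Transversal of `A ⊆ S` w.r.t. a compatibility `P : S × S' → {0,1}`:
all `y ∈ S'` with `P(x,y) = 0` for every `x ∈ A`. -/
def transversal {S S' : Type*} (P : S → S' → Prop) (A : Set S) : Set S' :=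
  {y : S' | ∀ x ∈ A, ¬ P x y}

/-- A (crisp) ambiguous representation of `S₁` in `S₂`. -/
def AmbRep {S₁ S₂ : Type*} [PartialOrder S₁] [PartialOrder S₂] (R : Set (S₁ × S₂)) : Prop :=
  (∀ x : S₁, ({y : S₂ | (x, y) ∈ R}).Nonempty ∧ ScottClosed {y : S₂ | (x, y) ∈ R}) ∧
  (∀ y : S₂, IsUpperSet {x : S₁ | (x, y) ∈ R})

/-- The pseudo-inverse of a relation `R ⊆ S₁ × S₂` w.r.t. compatibilities
`P₁ : S₁ × T₁ → {0,1}` and `P₂ : S₂ × T₂ → {0,1}`. -/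
def psInv {S₁ S₂ T₁ T₂ : Type*} (P₁ : S₁ → T₁ → Prop) (P₂ : S₂ → T₂ → Prop)
    (R : Set (S₁ × S₂)) : Set (T₂ × T₁) :=
  {p : T₂ × T₁ | ∀ x : S₁, P₁ x p.2 → ∃ y : S₂, (x, y) ∈ R ∧ P₂ y p.1}

/-- Composition `R ; Q` of ambiguous representations. -/
def ambComp {S₁ S₂ S₃ : Type*} [PartialOrder S₃]
    (R : Set (S₁ × S₂)) (Q : Set (S₂ × S₃)) : Set (S₁ × S₃) :=
  {p : S₁ × S₃ | ∀ z' : S₃, WayBelow z' p.2 → ∃ y : S₂, (p.1, y) ∈ R ∧ (y, z') ∈ Q}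

/-- Pseudo-invertibility condition (c). -/
def PseudoInvertible {S₁ S₂ : Type*} [PartialOrder S₁] [PartialOrder S₂]
    (R : Set (S₁ × S₂)) : Prop :=
  ∀ x y, (x, y) ∈ R → ∀ y', WayBelow y' y → ∃ x', WayBelow x' x ∧ (x', y') ∈ R

/-- An `L`-fuzzy ambiguous representation of `S₁` in `S₂`. -/
def LAmbRep {S₁ S₂ L : Type*} [PartialOrder S₁] [PartialOrder S₂] [PartialOrder L]
    (R : Set (S₁ × S₂ × L)) : Prop :=
  (∀ (y : S₂) (α : L), IsUpperSet {x : S₁ | (x, y, α) ∈ R}) ∧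
  (∀ (x : S₁) (α : L),
    ({y : S₂ | (x, y, α) ∈ R}).Nonempty ∧ ScottClosed {y : S₂ | (x, y, α) ∈ R}) ∧
  (∀ (x : S₁) (y : S₂), ({α : L | (x, y, α) ∈ R}).Nonempty ∧
    DirectedOn (· ≤ ·) {α : L | (x, y, α) ∈ R} ∧ ScottClosed {α : L | (x, y, α) ∈ R})

/-- The `α`-cut of an `L`-fuzzy relation. -/
def lCut {S₁ S₂ L : Type*} (R : Set (S₁ × S₂ × L)) (α : L) : Set (S₁ × S₂) :=
  {p : S₁ × S₂ | (p.1, p.2, α) ∈ R}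

/-- The pseudo-inverse of an `L`-fuzzy ambiguous representation, given through its
`α`-cuts: `(R⊤)_α = ⋂_{β ≪ α} (R_β)⊤`. -/
def lpsInv {S₁ S₂ T₁ T₂ L : Type*} [PartialOrder L]
    (P₁ : S₁ → T₁ → Prop) (P₂ : S₂ → T₂ → Prop) (R : Set (S₁ × S₂ × L)) :
    Set (T₂ × T₁ × L) :=
  {p : T₂ × T₁ × L | ∀ β : L, WayBelow β p.2.2 → (p.1, p.2.1) ∈ psInv P₁ P₂ (lCut R β)}

/-- Pseudo-invertibility condition (d) for `L`-fuzzy ambiguous representations. -/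
def LPseudoInvertible {S₁ S₂ L : Type*} [PartialOrder S₁] [PartialOrder S₂] [PartialOrder L]
    (R : Set (S₁ × S₂ × L)) : Prop :=
  ∀ x y α, (x, y, α) ∈ R → ∀ y', WayBelow y' y → ∀ α', WayBelow α' α →
    ∃ x', WayBelow x' x ∧ (x', y', α') ∈ R

/-- A unital quantale structure on a complete lattice: an associative multiplication
distributing over arbitrary suprema in each variable, with the top element as two-sided
unit. -/
def IsQuantaleMul {L : Type*} [CompleteLattice L] (mul : L → L → L) : Prop :=
  (∀ a b c, mul (mul a b) c = mul a (mul b c)) ∧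
  (∀ (s : Set L) (b : L), mul (sSup s) b = ⨆ a ∈ s, mul a b) ∧
  (∀ (a : L) (s : Set L), mul a (sSup s) = ⨆ b ∈ s, mul a b) ∧
  (∀ a, mul ⊤ a = a) ∧ (∀ a, mul a ⊤ = a)

/-- Composition `R ⊛ Q` of `L`-fuzzy ambiguous representations w.r.t. a quantale
multiplication `mul` on `L`. -/
def lComp {S₁ S₂ S₃ L : Type*} [PartialOrder S₃] [CompleteLattice L] (mul : L → L → L)
    (R : Set (S₁ × S₂ × L)) (Q : Set (S₂ × S₃ × L)) : Set (S₁ × S₃ × L) :=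
  {p : S₁ × S₃ × L | ∀ z' : S₃, WayBelow z' p.2.1 → ∀ α' : L, WayBelow α' p.2.2 →
    ∃ (n : ℕ) (y : Fin n → S₂) (β γ : Fin n → L),
      (∀ i, (p.1, y i, β i) ∈ R ∧ (y i, z', γ i) ∈ Q) ∧ α' ≤ ⨆ i, mul (β i) (γ i)}

/-
Relational composition `○` satisfies `Q⊤ ○ R⊤ ⊆ (R ○ Q)⊤` for arbitrary relations, and it is
contained in `;` as soon as the cuts of the second factor are lower sets. A pair `(z, x)` of
`Q⊤ ; R⊤` has `(z, x')` in `Q⊤ ○ R⊤` for all `x' ≪ x`. It only remains to pass from these `x'`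
to `x`, and this is possible since a Scott continuous `P₁` with `P₁(s, x) = 1` already has
`P₁(s, x') = 1` for some `x' ≪ x`.
-/

/-- A continuous poset: every element is the supremum of the elements way below it, which form
a nonempty directed set. It isolates the approximation property of a continuous semilattice.
Nonemptiness is stated separately because `DirectedOn` holds for the empty set. -/
def IsContinuousPoset (α : Type*) [PartialOrder α] : Prop :=
  ∀ y : α, {x : α | WayBelow x y}.Nonempty ∧ DirectedOn (· ≤ ·) {x : α | WayBelow x y} ∧
    IsLUB {x : α | WayBelow x y} y

section WayBelow

variable {α : Type*} [PartialOrder α]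

theorem WayBelow.le {x y : α} (h : WayBelow x y) : x ≤ y := by
  obtain ⟨d, rfl, hxd⟩ := h {y} (Set.singleton_nonempty y) (directedOn_singleton y) y
    isLUB_singleton le_rfl
  exact hxd

theorem wayBelow_bot_left [OrderBot α] (y : α) : WayBelow ⊥ y :=
  fun _ ⟨d, hd⟩ _ _ _ _ => ⟨d, hd, bot_le⟩

theorem IsContinuousSemilattice.isContinuousPoset {β : Type*} [SemilatticeInf β] [OrderBot β]
    (h : IsContinuousSemilattice β) : IsContinuousPoset β :=
  fun y => ⟨⟨⊥, wayBelow_bot_left y⟩, h.2 y⟩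

theorem IsContinuousPoset.exists_wayBelow_mem (h : IsContinuousPoset α) {U : Set α}
    (hU : DirSupInacc U) {y : α} (hy : y ∈ U) : ∃ x ∈ U, WayBelow x y := by
  obtain ⟨hne, hdir, hlub⟩ := h y
  obtain ⟨x, hxy, hxU⟩ := hU hne hdir hlub hy
  exact ⟨x, hxU, hxy⟩

end WayBelow

theorem IsCompatibility.dirSupInacc_right {S S' : Type*} [SemilatticeInf S] [OrderBot S]
    [SemilatticeInf S'] [OrderBot S'] {P : S → S' → Prop} (hP : IsCompatibility P) (x : S) :
    DirSupInacc {y : S' | P x y} := by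
  intro D hne hdir y hlub hxy
  obtain ⟨-, -, -, -, hcont⟩ := hP
  have hne' : (({x} : Set S) ×ˢ D).Nonempty := (Set.singleton_nonempty x).prod hne
  have hdir' : DirectedOn (· ≤ ·) (({x} : Set S) ×ˢ D) := (directedOn_singleton x).prod hdir
  have hlub' : IsLUB (({x} : Set S) ×ˢ D) (x, y) :=
    isLUB_singleton.prod (Set.singleton_nonempty x) hne hlub
  obtain ⟨⟨_, d⟩, ⟨rfl, hd⟩, hxd⟩ := (hcont _ hne' hdir' (x, y) hlub').1 hxy
  exact ⟨d, hd, hxd⟩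

section PsInv

open scoped SetRel

variable {S₁ S₂ S₃ T₁ T₂ T₃ : Type*} {P₁ : S₁ → T₁ → Prop} {P₂ : S₂ → T₂ → Prop}
  {P₃ : S₃ → T₃ → Prop}

theorem psInv_mono {R R' : Set (S₁ × S₂)} (h : R ⊆ R') : psInv P₁ P₂ R ⊆ psInv P₁ P₂ R' := by
  intro p hp s hs
  obtain ⟨t, hst, ht⟩ := hp s hs
  exact ⟨t, h hst, ht⟩

theorem psInv_comp_psInv_subset (R : Set (S₁ × S₂)) (Q : Set (S₂ × S₃)) :
    psInv P₂ P₃ Q ○ psInv P₁ P₂ R ⊆ psInv P₁ P₃ (R ○ Q) := by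
  rintro ⟨z, x⟩ ⟨y, hzy, hyx⟩ s hs
  obtain ⟨t, hst, ht⟩ := hyx s hs
  obtain ⟨u, htu, hu⟩ := hzy t ht
  exact ⟨u, ⟨t, hst, htu⟩, hu⟩

theorem comp_subset_ambComp [PartialOrder S₃] (R : Set (S₁ × S₂)) {Q : Set (S₂ × S₃)}
    (hQ : ∀ t, IsLowerSet {u | (t, u) ∈ Q}) : R ○ Q ⊆ ambComp R Q := by
  rintro ⟨s, u⟩ ⟨t, hst, htu⟩ u' hu'
  exact ⟨t, hst, hQ t hu'.le htu⟩

theorem mem_psInv_of_forall_wayBelow [PartialOrder T₁] (hT₁ : IsContinuousPoset T₁)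
    (hP₁ : ∀ s, DirSupInacc {x | P₁ s x}) {R : Set (S₁ × S₂)} {y : T₂} {x : T₁}
    (h : ∀ x', WayBelow x' x → (y, x') ∈ psInv P₁ P₂ R) : (y, x) ∈ psInv P₁ P₂ R := by
  intro s hs
  obtain ⟨x', hsx', hx'⟩ := hT₁.exists_wayBelow_mem (hP₁ s) hs
  exact h x' hx' s hsx'

theorem stmt10_general [PartialOrder S₃] [PartialOrder T₁] (hT₁ : IsContinuousPoset T₁)
    (P₁ : S₁ → T₁ → Prop) (P₂ : S₂ → T₂ → Prop) (P₃ : S₃ → T₃ → Prop)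
    (hP₁ : ∀ s, DirSupInacc {x | P₁ s x}) (R : Set (S₁ × S₂)) (Q : Set (S₂ × S₃))
    (hQ : ∀ t, IsLowerSet {u | (t, u) ∈ Q}) :
    ambComp (psInv P₂ P₃ Q) (psInv P₁ P₂ R) ⊆ psInv P₁ P₃ (ambComp R Q) := by
  rintro ⟨z, x⟩ hzx
  refine mem_psInv_of_forall_wayBelow hT₁ hP₁ fun x' hx' => ?_
  have hzx' : (z, x') ∈ psInv P₂ P₃ Q ○ psInv P₁ P₂ R := hzx x' hx'
  exact psInv_mono (comp_subset_ambComp R hQ) (psInv_comp_psInv_subset R Q hzx')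

end PsInv

/-- `Q⊤ ; R⊤ ⊆ (R;Q)⊤`. -/
theorem stmt10 {S₁ S₂ S₃ T₁ T₂ T₃ : Type*}
    [SemilatticeInf S₁] [OrderBot S₁] [SemilatticeInf S₂] [OrderBot S₂]
    [SemilatticeInf S₃] [OrderBot S₃]
    [SemilatticeInf T₁] [OrderBot T₁] [SemilatticeInf T₂] [OrderBot T₂]
    [SemilatticeInf T₃] [OrderBot T₃]
    (h₁ : IsContinuousSemilattice S₁) (h₂ : IsContinuousSemilattice S₂)
    (h₃ : IsContinuousSemilattice S₃)
    (ht₁ : IsContinuousSemilattice T₁) (ht₂ : IsContinuousSemilattice T₂)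
    (ht₃ : IsContinuousSemilattice T₃)
    (P₁ : S₁ → T₁ → Prop) (P₂ : S₂ → T₂ → Prop) (P₃ : S₃ → T₃ → Prop)
    (hP₁ : IsSeparatingCompatibility P₁) (hP₂ : IsSeparatingCompatibility P₂)
    (hP₃ : IsSeparatingCompatibility P₃)
    (R : Set (S₁ × S₂)) (Q : Set (S₂ × S₃)) (hR : AmbRep R) (hQ : AmbRep Q) :
    ambComp (psInv P₂ P₃ Q) (psInv P₁ P₂ R) ⊆ psInv P₁ P₃ (ambComp R Q) :=
  stmt10_general ht₁.isContinuousPoset P₁ P₂ P₃ hP₁.1.dirSupInacc_right R Q fun t => (hQ.1 t).2.1
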